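/- Let u : A → B be a morphism of noetherian rings, M a finitely generated A-module, N a finitely generated B-module which is flat as an A-module, and n a natural number. Consider M ⊗_A N as a B-module. If M satisfies Serre's condition (S_n) and for every P ∈ Supp(M) the fiber module N_P/PN_P satisfies the condition (C_n) as a module over B_P/PB_P, then M ⊗_A N satisfies the condition (C_n) as a B-module. -/

import Mathlib

noncomputable section

open TensorProduct

universe u v w





/-- The depth of the ideal `I` on the module `M`: the supremum of lengths of
`M`-regular sequences with entries in `I`. -/
noncomputable def idealDepth (A : Type u) [CommRing A] (I : Ideal A)
    (M : Type v) [AddCommGroup M] [Module A M] : ℕ∞ :=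
  sSup {n : ℕ∞ | ∃ rs : List A, (rs.length : ℕ∞) = n ∧ (∀ r ∈ rs, r ∈ I) ∧
    RingTheory.Sequence.IsRegular M rs}

/-- The depth of a module over a local ring. -/
noncomputable def localDepth (A : Type u) [CommRing A] [IsLocalRing A]
    (M : Type v) [AddCommGroup M] [Module A M] : ℕ∞ :=
  idealDepth A (IsLocalRing.maximalIdeal A) M

/-- The (Krull) dimension of a module, i.e. the Krull dimension of its support. -/
noncomputable def supportDim (A : Type u) [CommRing A]
    (M : Type v) [AddCommGroup M] [Module A M] : WithBot ℕ∞ :=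
  Order.krullDim (Module.support A M)

/-- `depth (M_P)` : the depth of the localization of `M` at a prime `P`,
over the local ring `A_P`. -/
noncomputable def depthAt (A : Type u) [CommRing A]
    (M : Type v) [AddCommGroup M] [Module A M] (P : PrimeSpectrum A) : ℕ∞ :=
  localDepth (Localization.AtPrime P.asIdeal) (LocalizedModule P.asIdeal.primeCompl M)

/-- `ht_M(P) = dim (M_P)` : the height of a prime `P` in the support of `M`,
i.e. the dimension of the localized module `M_P` over `A_P`. -/
noncomputable def heightAt (A : Type u) [CommRing A]
    (M : Type v) [AddCommGroup M] [Module A M] (P : PrimeSpectrum A) : WithBot ℕ∞ :=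
  supportDim (Localization.AtPrime P.asIdeal) (LocalizedModule P.asIdeal.primeCompl M)

/-- Serre's condition `(S_n)` for a module: for every `P` in the support,
`depth (M_P) ≥ min (n, ht_M(P))`. -/
def SerreCondS (A : Type u) [CommRing A] (n : ℕ)
    (M : Type v) [AddCommGroup M] [Module A M] : Prop :=
  ∀ P ∈ Module.support A M,
    min (n : WithBot ℕ∞) (heightAt A M P) ≤ (depthAt A M P : WithBot ℕ∞)

/-- The condition `(C_n)` for a module: for every `P` in the support,
`depth (M_P) ≥ min (n, ht_M(P)) - 1`, equivalently
`min (n, ht_M(P)) ≤ depth (M_P) + 1`. -/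
def CondC (A : Type u) [CommRing A] (n : ℕ)
    (M : Type v) [AddCommGroup M] [Module A M] : Prop :=
  ∀ P ∈ Module.support A M,
    min (n : WithBot ℕ∞) (heightAt A M P) ≤ (depthAt A M P : WithBot ℕ∞) + 1

/-- A module `M` is almost Cohen-Macaulay if `depth(P, M) = depth (M_P)` for every
`P` in the support of `M` (Kang's definition). -/
def IsAlmostCMModule (A : Type u) [CommRing A]
    (M : Type v) [AddCommGroup M] [Module A M] : Prop :=
  ∀ P ∈ Module.support A M, idealDepth A P.asIdeal M = depthAt A M P

/-- A module `M` is Cohen-Macaulay if `depth (M_P) = dim (M_P)` for every `P` in its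
support. -/
def IsCMModule (A : Type u) [CommRing A]
    (M : Type v) [AddCommGroup M] [Module A M] : Prop :=
  ∀ P ∈ Module.support A M, (depthAt A M P : WithBot ℕ∞) = heightAt A M P

/-- A ring is almost Cohen-Macaulay if it is an almost Cohen-Macaulay module over
itself. -/
abbrev IsAlmostCMRing (A : Type u) [CommRing A] : Prop := IsAlmostCMModule A A

/-- A ring is Cohen-Macaulay if it is a Cohen-Macaulay module over itself, i.e. all its
localizations at primes have depth equal to dimension. -/
abbrev IsCMRing (A : Type u) [CommRing A] : Prop := IsCMModule A A

/-- A ring satisfies `(C_n)` if it does so as a module over itself. -/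
abbrev RingCondC (A : Type u) [CommRing A] (n : ℕ) : Prop := CondC A n A

/-- A ring satisfies `(S_n)` if it does so as a module over itself. -/
abbrev RingSerreCondS (A : Type u) [CommRing A] (n : ℕ) : Prop := SerreCondS A n A






variable (A : Type u) [CommRing A] (B : Type u) [CommRing B] [Algebra A B]

/-- The image in `B` of the complement of a prime `P` of `A`, as a submonoid of `B`. -/
noncomputable def fiberSubmonoid (P : PrimeSpectrum A) : Submonoid B :=
  Submonoid.map (algebraMap A B) P.asIdeal.primeCompl

/-- `PB_P` : the extension of the prime `P` of `A` to the localization `B_P` of `B`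
at (the image of) the complement of `P`. -/
noncomputable def fiberIdeal (P : PrimeSpectrum A) :
    Ideal (Localization (fiberSubmonoid A B P)) :=
  Ideal.map ((algebraMap B (Localization (fiberSubmonoid A B P))).comp (algebraMap A B))
    P.asIdeal

/-- The fiber ring `B_P / P B_P` of `A → B` at a prime `P` of `A`. -/
noncomputable def fiberRing (P : PrimeSpectrum A) : Type u :=
  Localization (fiberSubmonoid A B P) ⧸ fiberIdeal A B P

noncomputable instance (P : PrimeSpectrum A) : CommRing (fiberRing A B P) :=
  inferInstanceAs (CommRing (Localization (fiberSubmonoid A B P) ⧸ fiberIdeal A B P))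

/-- The fiber module `N_P / P N_P` of a `B`-module `N` at a prime `P` of `A`. -/
noncomputable def fiberModule (P : PrimeSpectrum A)
    (N : Type u) [AddCommGroup N] [Module B N] : Type u :=
  LocalizedModule (fiberSubmonoid A B P) N ⧸
    (fiberIdeal A B P •
      (⊤ : Submodule (Localization (fiberSubmonoid A B P))
        (LocalizedModule (fiberSubmonoid A B P) N)))

noncomputable instance (P : PrimeSpectrum A) (N : Type u) [AddCommGroup N] [Module B N] :
    AddCommGroup (fiberModule A B P N) :=
  inferInstanceAs (AddCommGroup (LocalizedModule (fiberSubmonoid A B P) N ⧸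
    (fiberIdeal A B P •
      (⊤ : Submodule (Localization (fiberSubmonoid A B P))
        (LocalizedModule (fiberSubmonoid A B P) N)))))

/-- `N_P / P N_P` is a module over the fiber ring `B_P / P B_P`. -/
noncomputable instance (P : PrimeSpectrum A) (N : Type u) [AddCommGroup N] [Module B N] :
    Module (fiberRing A B P) (fiberModule A B P N) :=
  inferInstanceAs (Module (Localization (fiberSubmonoid A B P) ⧸ fiberIdeal A B P)
    (LocalizedModule (fiberSubmonoid A B P) N ⧸
      (fiberIdeal A B P •
        (⊤ : Submodule (Localization (fiberSubmonoid A B P))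
          (LocalizedModule (fiberSubmonoid A B P) N)))))








/-- The canonical `B`-module structure on `M ⊗[A] N`, where `N` is a `B`-module,
given by `b • (m ⊗ n) = m ⊗ (b • n)`. -/
noncomputable instance tensorRightModule (A : Type u) [CommRing A] (B : Type u) [CommRing B]
    [Algebra A B] (M : Type u) [AddCommGroup M] [Module A M]
    (N : Type u) [AddCommGroup N] [Module A N] [Module B N] [IsScalarTower A B N] :
    Module B (M ⊗[A] N) where
  smul b x := (TensorProduct.comm A M N).symm (b • TensorProduct.comm A M N x)
  one_smul x := by
    show (TensorProduct.comm A M N).symm ((1 : B) • TensorProduct.comm A M N x) = x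
    simp
  mul_smul a b x := by
    show (TensorProduct.comm A M N).symm ((a * b) • TensorProduct.comm A M N x) =
      (TensorProduct.comm A M N).symm (a • TensorProduct.comm A M N
        ((TensorProduct.comm A M N).symm (b • TensorProduct.comm A M N x)))
    simp [mul_smul]
  smul_zero b := by
    show (TensorProduct.comm A M N).symm (b • TensorProduct.comm A M N 0) = 0
    simp
  smul_add b x y := by
    show (TensorProduct.comm A M N).symm (b • TensorProduct.comm A M N (x + y)) =
      (TensorProduct.comm A M N).symm (b • TensorProduct.comm A M N x) +
      (TensorProduct.comm A M N).symm (b • TensorProduct.comm A M N y)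
    simp
  add_smul a b x := by
    show (TensorProduct.comm A M N).symm ((a + b) • TensorProduct.comm A M N x) =
      (TensorProduct.comm A M N).symm (a • TensorProduct.comm A M N x) +
      (TensorProduct.comm A M N).symm (b • TensorProduct.comm A M N x)
    simp [add_smul]
  zero_smul x := by
    show (TensorProduct.comm A M N).symm ((0 : B) • TensorProduct.comm A M N x) = 0
    simp

/-!
Let `Q` be a prime of `B` over `P`. Along the flat local homomorphism `A_P → B_Q`, an
`N_Q / P N_Q`-regular sequence followed by an `M_P`-regular sequence is `(M ⊗ N)_Q`-regular. Indeed,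
an element `y` regular on `N_Q / P N_Q` is regular on `N_Q ⊗ L` for every `A_P`-module `L` of finite
length, hence by Krull's intersection theorem on `N_Q ⊗ L` for every finite `L`, and therefore
`N_Q / y N_Q` is again flat over `A_P`. Thus `depth M_P + depth (N_Q / P N_Q) ≤ depth (M ⊗ N)_Q`,
while `dim (M ⊗ N)_Q ≤ dim M_P + dim (N_Q / P N_Q)`. So the defects `c` in `min n dim ≤ depth + c`
add up: `(S_n)` for `M` contributes `0`, and `(C_n)` for the fibre module at `P`, of which
`N_Q / P N_Q` is a localization, contributes `1`.
-/

-- The standard action on the left factor of `N ⊗ M` has to win over `tensorRightModule`.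
attribute [local instance] TensorProduct.leftModule TensorProduct.instModule

open RingTheory.Sequence IsLocalRing Pointwise

section TensorQuotient

variable {R S : Type*} [CommRing R] [CommRing S] [Algebra R S]
  (N : Type*) [AddCommGroup N] [Module R N] [Module S N] [IsScalarTower R S N]
  (M : Type*) [AddCommGroup M] [Module R M]

lemma finite_tensorProduct_left [Module.Finite S N] [Module.Finite R M] :
    Module.Finite S (N ⊗[R] M) :=
  .equiv (AlgebraTensorModule.cancelBaseChange R S S N M)

/-- The `S`-linear isomorphism `(N ⊗ M) / y (N ⊗ M) ≃ (N / yN) ⊗ M`. -/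
def quotSMulTopTensorEquiv (y : S) :
    QuotSMulTop y (N ⊗[R] M) ≃ₗ[S] QuotSMulTop y N ⊗[R] M :=
  QuotSMulTop.congr y (AlgebraTensorModule.cancelBaseChange R S S N M).symm ≪≫ₗ
    (QuotSMulTop.quotSMulTopTensorEquivQuotSMulTop y (S ⊗[R] M) N).symm ≪≫ₗ
      AlgebraTensorModule.cancelBaseChange R S S (QuotSMulTop y N) M

lemma quotSMulTopTensorEquiv_mk_tmul (y : S) (n : N) (m : M) :
    quotSMulTopTensorEquiv N M y (Submodule.Quotient.mk (n ⊗ₜ[R] m)) =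
      Submodule.Quotient.mk n ⊗ₜ[R] m := by
  change AlgebraTensorModule.cancelBaseChange R S S (QuotSMulTop y N) M
    ((QuotSMulTop.quotSMulTopTensorEquivQuotSMulTop y (S ⊗[R] M) N).symm
      (Submodule.Quotient.mk (n ⊗ₜ[S] (1 ⊗ₜ[R] m)))) = _
  simp only [QuotSMulTop.quotSMulTopTensorEquivQuotSMulTop, QuotSMulTop.equivQuotTensor,
    LinearEquiv.trans_symm, LinearEquiv.symm_symm, LinearEquiv.symm_rTensor,
    LinearEquiv.trans_apply, Submodule.quotEquivOfEq_mk, quotTensorEquivQuotSMul_symm_mk,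
    assoc_symm_tmul, LinearEquiv.rTensor_tmul, quotTensorEquivQuotSMul_mk_one_tmul,
    AlgebraTensorModule.cancelBaseChange_tmul, one_smul]
  rfl

/-- The `S`-linear isomorphism `N / IN ≃ N ⊗ R/I`. -/
def quotientMapSMulTopEquivTensor (I : Ideal R) :
    (N ⧸ (I.map (algebraMap R S) • (⊤ : Submodule S N))) ≃ₗ[S] N ⊗[R] (R ⧸ I) :=
  (tensorQuotEquivQuotSMul N (I.map (algebraMap R S))).symm ≪≫ₗ
    TensorProduct.congr (.refl S N) (Ideal.qoutMapEquivTensorQout S) ≪≫ₗ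
      AlgebraTensorModule.cancelBaseChange R S S N (R ⧸ I)

/-- The `S`-linear isomorphism `(N ⊗ M) / I (N ⊗ M) ≃ N ⊗ (M / IM)`. -/
def quotientMapSMulTopTensorEquiv (I : Ideal R) :
    ((N ⊗[R] M) ⧸ (I.map (algebraMap R S) • (⊤ : Submodule S (N ⊗[R] M)))) ≃ₗ[S]
      N ⊗[R] (M ⧸ (I • (⊤ : Submodule R M))) :=
  quotientMapSMulTopEquivTensor (N ⊗[R] M) I ≪≫ₗ
    AlgebraTensorModule.assoc R R S N M (R ⧸ I) ≪≫ₗ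
      AlgebraTensorModule.congr (.refl S N) (tensorQuotEquivQuotSMul M I)

end TensorQuotient

section Regular

lemma isFiniteLength_quotient_maximalIdeal_pow_smul_top {R : Type*} [CommRing R] [IsLocalRing R]
    [IsNoetherianRing R] (M : Type*) [AddCommGroup M] [Module R M] [Module.Finite R M] (k : ℕ) :
    IsFiniteLength R (M ⧸ (maximalIdeal R ^ k • (⊤ : Submodule R M))) := by
  rcases Nat.eq_zero_or_pos k with rfl | hk
  · rw [pow_zero, Ideal.one_eq_top, Submodule.top_smul]
    exact .of_subsingleton
  have : IsArtinianRing (R ⧸ maximalIdeal R ^ k) := by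
    refine quotient_artinian_of_mem_minimalPrimes_of_isLocalRing _ ?_
    rw [← Ideal.radical_minimalPrimes, Ideal.radical_pow _ hk.ne', Ideal.radical_minimalPrimes,
      Ideal.minimalPrimes_eq_subsingleton_self, Set.mem_singleton_iff]
  have : Module.Finite (R ⧸ maximalIdeal R ^ k)
    (M ⧸ (maximalIdeal R ^ k • (⊤ : Submodule R M))) := .of_restrictScalars_finite R _ _
  rw [isFiniteLength_iff_isNoetherian_isArtinian]
  exact ⟨inferInstance, isArtinian_of_surjective_algebraMap (R := R ⧸ maximalIdeal R ^ k)
    Ideal.Quotient.mk_surjective⟩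

lemma isSMulRegular_of_forall_quotient_pow_smul_top {S W : Type*} [CommRing S] [IsLocalRing S]
    [IsNoetherianRing S] [AddCommGroup W] [Module S W] [Module.Finite S W] {J : Ideal S}
    (hJ : J ≠ ⊤) {y : S} (hy : ∀ k : ℕ, IsSMulRegular (W ⧸ (J ^ k • (⊤ : Submodule S W))) y) :
    IsSMulRegular W y := by
  refine .of_right_eq_zero_of_smul fun w hw ↦ ?_
  rw [← Submodule.mem_bot S, ← Ideal.iInf_pow_smul_eq_bot_of_isLocalRing _ hJ, Submodule.mem_iInf]
  intro k
  rw [← Submodule.Quotient.mk_eq_zero]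
  exact (hy k).right_eq_zero_of_smul
    (by rw [← Submodule.Quotient.mk_smul, hw, Submodule.Quotient.mk_zero])

variable {R S : Type*} [CommRing R] [CommRing S] [Algebra R S] [IsLocalRing R]
  {N : Type*} [AddCommGroup N] [Module R N] [Module S N] [IsScalarTower R S N] [Module.Flat R N]

lemma isSMulRegular_tensorProduct_of_isFiniteLength {y : S}
    (hy : IsSMulRegular (N ⊗[R] (R ⧸ maximalIdeal R)) y)
    {L : Type*} [AddCommGroup L] [Module R L] (hL : IsFiniteLength R L) :
    IsSMulRegular (N ⊗[R] L) y := by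
  induction hL with
  | of_subsingleton => exact fun a b _ ↦ Subsingleton.elim a b
  | @of_simple_quotient L _ _ L' _ _ ih =>
    have hq : IsSMulRegular (N ⊗[R] (L ⧸ L')) y := by
      obtain ⟨I, hI, ⟨e⟩⟩ := isSimpleModule_iff_quot_maximal.mp ‹IsSimpleModule R (L ⧸ L')›
      obtain rfl := eq_maximalIdeal hI
      exact ((AlgebraTensorModule.congr (.refl S N) e).isSMulRegular_congr y).mpr hy
    have hexact : Function.Exact (AlgebraTensorModule.lTensor S N L'.subtype)
        (AlgebraTensorModule.lTensor S N L'.mkQ) :=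
      lTensor_exact N (LinearMap.exact_subtype_mkQ L') L'.mkQ_surjective
    exact isSMulRegular_of_range_eq_ker
      (Module.Flat.lTensor_preserves_injective_linearMap _ L'.injective_subtype)
      hexact.linearMap_ker_eq.symm ih hq

variable [IsNoetherianRing R] [IsLocalRing S] [IsNoetherianRing S]
  [IsLocalHom (algebraMap R S)] [Module.Finite S N]

lemma isSMulRegular_tensorProduct_of_residue {y : S}
    (hy : IsSMulRegular (N ⊗[R] (R ⧸ maximalIdeal R)) y)
    (M : Type*) [AddCommGroup M] [Module R M] [Module.Finite R M] :
    IsSMulRegular (N ⊗[R] M) y := by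
  have := finite_tensorProduct_left (R := R) (S := S) N M
  refine isSMulRegular_of_forall_quotient_pow_smul_top
    (map_maximalIdeal_lt_top (algebraMap R S)).ne fun k ↦ ?_
  rw [← Ideal.map_pow, (quotientMapSMulTopTensorEquiv N M (maximalIdeal R ^ k)).isSMulRegular_congr]
  exact isSMulRegular_tensorProduct_of_isFiniteLength hy
    (isFiniteLength_quotient_maximalIdeal_pow_smul_top M k)

-- Injectivity of `N ⊗ I → N ⊗ R` survives reduction modulo `y` as `y` is regular on `N ⊗ R/I`.
lemma flat_quotSMulTop_of_residue {y : S}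
    (hy : IsSMulRegular (N ⊗[R] (R ⧸ maximalIdeal R)) y) :
    Module.Flat R (QuotSMulTop y N) := by
  rw [Module.Flat.iff_lTensor_injective']
  intro I
  let ι := AlgebraTensorModule.lTensor S N I.subtype
  have hι : Function.Injective ι :=
    Module.Flat.lTensor_preserves_injective_linearMap _ I.injective_subtype
  have hιy := QuotSMulTop.map_first_exact_on_four_term_exact_of_isSMulRegular_last
    ((LinearMap.exact_zero_iff_injective (N ⊗[R] I) ι).mpr hι)
    (f₃ := AlgebraTensorModule.lTensor S N I.mkQ)
    (lTensor_exact N (LinearMap.exact_subtype_mkQ I) I.mkQ_surjective)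
    (isSMulRegular_tensorProduct_of_residue hy (R ⧸ I))
  rw [map_zero, LinearMap.exact_zero_iff_injective] at hιy
  have hcomm : I.subtype.lTensor (QuotSMulTop y N) ∘ quotSMulTopTensorEquiv N I y =
      quotSMulTopTensorEquiv N R y ∘ QuotSMulTop.map y ι := by
    ext a
    obtain ⟨a, rfl⟩ := Submodule.Quotient.mk_surjective _ a
    induction a with
    | zero => simp
    | add a b ha hb => simp_all
    | tmul n i => simp [ι, quotSMulTopTensorEquiv_mk_tmul]
  exact .of_comp_right (hcomm ▸ (quotSMulTopTensorEquiv N R y).injective.comp hιy)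
    (quotSMulTopTensorEquiv N I y).surjective

lemma isWeaklyRegular_tensorProduct_append {ys : List S}
    (hys : IsWeaklyRegular (N ⊗[R] (R ⧸ maximalIdeal R)) ys) {M : Type*} [AddCommGroup M]
    [Module R M] [Module.Finite R M] {xs : List R} (hxs : IsWeaklyRegular M xs) :
    IsWeaklyRegular (N ⊗[R] M) (ys ++ xs.map (algebraMap R S)) := by
  induction ys generalizing N with
  | nil => exact (isWeaklyRegular_map_algebraMap_iff S _ xs).mpr hxs.isWeaklyRegular_lTensor
  | cons y ys ih =>
    rw [isWeaklyRegular_cons_iff] at hys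
    have := flat_quotSMulTop_of_residue hys.1
    rw [(quotSMulTopTensorEquiv _ _ y).isWeaklyRegular_congr] at hys
    rw [List.cons_append, isWeaklyRegular_cons_iff,
      (quotSMulTopTensorEquiv _ _ y).isWeaklyRegular_congr]
    exact ⟨isSMulRegular_tensorProduct_of_residue hys.1 M, ih hys.2⟩

end Regular

section Depth

lemma length_le_localDepth {R : Type*} [CommRing R] [IsLocalRing R] {M : Type*} [AddCommGroup M]
    [Module R M] [Nontrivial M] [Module.Finite R M] {rs : List R}
    (hmem : ∀ r ∈ rs, r ∈ maximalIdeal R) (hrs : IsWeaklyRegular M rs) :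
    rs.length ≤ localDepth R M :=
  le_sSup ⟨rs, rfl, hmem, .of_isWeaklyRegular_of_mem_maximalIdeal M hmem hrs⟩

variable {R S : Type*} [CommRing R] [CommRing S] [Algebra R S] [IsLocalRing R] [IsLocalRing S]
  [IsLocalHom (algebraMap R S)]
  (N : Type*) [AddCommGroup N] [Module S N] [Module.Finite S N]

variable (R S) in
lemma nontrivial_quotient_map_maximalIdeal_smul_top [Nontrivial N] :
    Nontrivial (N ⧸ ((maximalIdeal R).map (algebraMap R S) • (⊤ : Submodule S N))) :=
  Submodule.Quotient.nontrivial_iff.mpr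
    (Submodule.top_ne_ideal_smul_of_le_jacobson_annihilator
      ((map_maximalIdeal_le _).trans (maximalIdeal_le_jacobson _))).symm

lemma localDepth_add_le_localDepth_tensorProduct [IsNoetherianRing R] [IsNoetherianRing S]
    [Module R N] [IsScalarTower R S N] [Module.Flat R N]
    (M : Type*) [AddCommGroup M] [Module R M] [Module.Finite R M] [Nontrivial (N ⊗[R] M)] :
    localDepth R M + localDepth S (N ⊗[R] (R ⧸ maximalIdeal R)) ≤ localDepth S (N ⊗[R] M) := by
  have := finite_tensorProduct_left (R := R) (S := S) N M
  have hM : Nontrivial M := not_subsingleton_iff_nontrivial.mp fun _ ↦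
    not_subsingleton (N ⊗[R] M) inferInstance
  have hN : Nontrivial N := not_subsingleton_iff_nontrivial.mp fun _ ↦
    not_subsingleton (N ⊗[R] M) inferInstance
  have : Nontrivial (N ⊗[R] (R ⧸ maximalIdeal R)) :=
    have := nontrivial_quotient_map_maximalIdeal_smul_top R S N
    (quotientMapSMulTopEquivTensor (S := S) N (maximalIdeal R)).symm.toEquiv.nontrivial
  have hsum : ∀ xs : List R, (∀ x ∈ xs, x ∈ maximalIdeal R) → IsRegular M xs →
      ∀ ys : List S, (∀ y ∈ ys, y ∈ maximalIdeal S) → IsRegular (N ⊗[R] (R ⧸ maximalIdeal R)) ys →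
        (xs.length + ys.length : ℕ∞) ≤ localDepth S (N ⊗[R] M) := by
    intro xs hxm hxr ys hym hyr
    have hmem : ∀ s ∈ ys ++ xs.map (algebraMap R S), s ∈ maximalIdeal S := by
      simp only [List.mem_append, List.mem_map]
      rintro s (hs | ⟨x, hx, rfl⟩)
      exacts [hym s hs, map_nonunit _ x (hxm x hx)]
    simpa [add_comm] using length_le_localDepth (M := N ⊗[R] M) hmem
      (isWeaklyRegular_tensorProduct_append hyr.1 hxr.1)
  rw [localDepth, localDepth, idealDepth, idealDepth, sSup_eq_iSup, sSup_eq_iSup]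
  refine ENat.biSup_add_biSup_le ?_ ?_ ?_
  · exact ⟨0, [], by simp, by simp, .nil R M⟩
  · exact ⟨0, [], by simp, by simp, .nil S _⟩
  · rintro _ ⟨xs, rfl, hxm, hxr⟩ _ ⟨ys, rfl, hym, hyr⟩
    exact hsum xs hxm hxr ys hym hyr

end Depth

section Dimension

section Ring

variable {R S : Type*} [CommRing R] [CommRing S] [Algebra R S] [IsLocalRing R] [IsLocalRing S]
  [IsNoetherianRing R] [IsNoetherianRing S] [IsLocalHom (algebraMap R S)]

variable (R S) in
lemma ringKrullDim_le_add_ringKrullDim_quotient_map_maximalIdeal :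
    ringKrullDim S ≤ ringKrullDim R + ringKrullDim (S ⧸ (maximalIdeal R).map (algebraMap R S)) := by
  have := Ideal.Quotient.nontrivial_iff.mpr (map_maximalIdeal_lt_top (algebraMap R S)).ne
  have := IsLocalRing.of_surjective' _
    (Ideal.Quotient.mk_surjective (I := (maximalIdeal R).map (algebraMap R S)))
  have hheight := Ideal.height_le_height_add_of_liesOver (maximalIdeal R) (maximalIdeal S)
  rw [← maximalIdeal_height_eq_ringKrullDim, ← maximalIdeal_height_eq_ringKrullDim,
    ← maximalIdeal_height_eq_ringKrullDim,
    ← map_maximalIdeal_of_surjective _ Ideal.Quotient.mk_surjective]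
  exact_mod_cast hheight

lemma ringKrullDim_quotient_le_add {I : Ideal R} {K : Ideal S}
    (hIK : I ≤ K.comap (algebraMap R S)) :
    ringKrullDim (S ⧸ K) ≤ ringKrullDim (R ⧸ I) +
      ringKrullDim (S ⧸ K ⊔ (maximalIdeal R).map (algebraMap R S)) := by
  rcases eq_or_ne K ⊤ with rfl | hK
  · have : Subsingleton (S ⧸ (⊤ : Ideal S)) := Ideal.Quotient.subsingleton_iff.mpr rfl
    rw [ringKrullDim_eq_bot_of_subsingleton]
    exact bot_le
  have hI : I ≠ ⊤ := by
    rintro rfl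
    exact hK (Ideal.comap_eq_top_iff.mp (top_le_iff.mp hIK))
  have := Ideal.Quotient.nontrivial_iff.mpr hK
  have := Ideal.Quotient.nontrivial_iff.mpr hI
  have := IsLocalRing.of_surjective' _ (Ideal.Quotient.mk_surjective (I := I))
  have := IsLocalRing.of_surjective' _ (Ideal.Quotient.mk_surjective (I := K))
  let := Ideal.Quotient.algebraQuotientOfLEComap hIK
  have : IsLocalHom (Ideal.Quotient.mk K) := .of_surjective _ Ideal.Quotient.mk_surjective
  have : IsLocalHom (algebraMap (R ⧸ I) (S ⧸ K)) := by
    refine ⟨fun r hr ↦ ?_⟩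
    obtain ⟨r, rfl⟩ := Ideal.Quotient.mk_surjective r
    exact (isUnit_of_map_unit (algebraMap R S) r
      (isUnit_of_map_unit (Ideal.Quotient.mk K) (algebraMap R S r) hr)).map (Ideal.Quotient.mk I)
  have hmap : ((maximalIdeal (R ⧸ I)).map (algebraMap (R ⧸ I) (S ⧸ K))) =
      ((maximalIdeal R).map (algebraMap R S)).map (Ideal.Quotient.mk K) := by
    rw [← map_maximalIdeal_of_surjective _ Ideal.Quotient.mk_surjective, Ideal.map_map,
      Ideal.map_map]
    rfl
  rw [← ringKrullDim_eq_of_ringEquiv (DoubleQuot.quotQuotEquivQuotSup K _), ← hmap]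
  exact ringKrullDim_le_add_ringKrullDim_quotient_map_maximalIdeal (R ⧸ I) (S ⧸ K)

end Ring

lemma supportDim_quotient_smul_top {S N : Type*} [CommRing S] [AddCommGroup N] [Module S N]
    [Module.Finite S N] (J : Ideal S) :
    Module.supportDim S (N ⧸ (J • (⊤ : Submodule S N))) =
      ringKrullDim (S ⧸ Module.annihilator S N ⊔ J) := by
  rw [Module.supportDim, Module.support_quotient, Module.support_eq_zeroLocus,
    ringKrullDim_quotient, PrimeSpectrum.zeroLocus_sup]

section Tensor

variable {R S : Type*} [CommRing R] [CommRing S] [Algebra R S]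
  (N : Type*) [AddCommGroup N] [Module R N] [Module S N] [IsScalarTower R S N]
  (M : Type*) [AddCommGroup M] [Module R M]

lemma annihilator_left_le_annihilator_tensorProduct :
    Module.annihilator S N ≤ Module.annihilator S (N ⊗[R] M) := by
  intro s hs
  rw [Module.mem_annihilator] at hs ⊢
  intro z
  induction z with
  | zero => simp
  | add a b ha hb => simp [ha, hb]
  | tmul n m => simp [TensorProduct.smul_tmul', hs]

lemma annihilator_right_le_annihilator_tensorProduct :
    Module.annihilator R M ≤ Module.annihilator R (N ⊗[R] M) := by
  intro r hr
  rw [Module.mem_annihilator] at hr ⊢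
  intro z
  induction z with
  | zero => simp
  | add a b ha hb => simp [ha, hb]
  | tmul n m => rw [← TensorProduct.tmul_smul, hr, TensorProduct.tmul_zero]

lemma supportDim_tensorProduct_le [IsLocalRing R] [IsLocalRing S]
    [IsNoetherianRing R] [IsNoetherianRing S] [IsLocalHom (algebraMap R S)]
    [Module.Finite S N] [Module.Finite R M] :
    Module.supportDim S (N ⊗[R] M) ≤
      Module.supportDim R M + Module.supportDim S (N ⊗[R] (R ⧸ maximalIdeal R)) := by
  have := finite_tensorProduct_left (R := R) (S := S) N M
  have hM : Module.annihilator R M ≤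
      (Module.annihilator S (N ⊗[R] M)).comap (algebraMap R S) :=
    (annihilator_right_le_annihilator_tensorProduct N M).trans_eq Module.comap_annihilator.symm
  have hN := annihilator_left_le_annihilator_tensorProduct (R := R) (S := S) N M
  rw [← Module.supportDim_eq_of_equiv (quotientMapSMulTopEquivTensor N (maximalIdeal R)),
    supportDim_quotient_smul_top, Module.supportDim_eq_ringKrullDim_quotient_annihilator,
    Module.supportDim_eq_ringKrullDim_quotient_annihilator]
  refine (ringKrullDim_quotient_le_add hM).trans ?_
  gcongr
  exact ringKrullDim_le_of_surjective (Ideal.Quotient.factor (sup_le_sup_right hN _))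
    (Ideal.Quotient.factor_surjective _)

end Tensor

end Dimension

lemma min_le_add_add_of_le_add {n a b d : WithBot ℕ∞} {x y z : ℕ∞} {c c' : ℕ} (hd : d ≤ a + b)
    (hz : x + y ≤ z) (ha : min n a ≤ x + c) (hb : min n b ≤ y + c') :
    min n d ≤ z + (c + c' : ℕ) := by
  rcases min_le_iff.mp ha with ha | ha
  · have hx : x + c ≤ z + (c + c' : ℕ) := add_le_add (le_self_add.trans hz) (by simp)
    exact (min_le_left _ _).trans (ha.trans (by exact_mod_cast hx))
  rcases min_le_iff.mp hb with hb | hb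
  · have hy : y + c' ≤ z + (c + c' : ℕ) := add_le_add (le_add_self.trans hz) (by simp)
    exact (min_le_left _ _).trans (hb.trans (by exact_mod_cast hy))
  have hxy : x + c + (y + c') ≤ z + (c + c' : ℕ) := by
    rw [add_add_add_comm, Nat.cast_add]
    gcongr
  exact (min_le_right _ _).trans (hd.trans ((add_le_add ha hb).trans (by exact_mod_cast hxy)))

/-- The inequality `min n (dim M) ≤ depth M + c` for a module over a local ring. Serre's condition
`(S_n)` asks for it with `c = 0`, and the condition `(C_n)` with `c = 1`, at every localization at a
prime of the support. -/
def SerreDefectLE (R : Type*) [CommRing R] [IsLocalRing R] (n c : ℕ)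
    (M : Type*) [AddCommGroup M] [Module R M] : Prop :=
  min (n : WithBot ℕ∞) (Module.supportDim R M) ≤ (localDepth R M : WithBot ℕ∞) + c

section RestrictScalars

variable {R : Type*} (S : Type*) [CommRing R] [CommRing S] [Algebra R S]
  {M : Type*} [AddCommGroup M] [Module R M] [Module S M] [IsScalarTower R S M]

lemma isRegular_map_algebraMap_iff (rs : List R) :
    IsRegular M (rs.map (algebraMap R S)) ↔ IsRegular M rs :=
  (AddEquiv.refl M).isRegular_congr <| List.forall₂_map_left_iff.mpr <|
    List.forall₂_same.mpr fun r _ ↦ algebraMap_smul S r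

lemma localDepth_le_of_surjective_algebraMap [IsLocalRing R] [IsLocalRing S]
    (h : Function.Surjective (algebraMap R S)) : localDepth S M ≤ localDepth R M := by
  have : IsLocalHom (algebraMap R S) := .of_surjective _ h
  refine sSup_le ?_
  rintro _ ⟨ss, rfl, hmem, hreg⟩
  obtain ⟨rs, rfl⟩ := List.map_surjective_iff.mpr h ss
  have hmem' : ∀ r ∈ rs, r ∈ maximalIdeal R := fun r hr hu ↦
    hmem _ (List.mem_map_of_mem hr) (hu.map _)
  exact le_sSup ⟨rs, by simp, hmem', (isRegular_map_algebraMap_iff S rs).mp hreg⟩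

lemma supportDim_eq_of_surjective_algebraMap [Module.Finite S M]
    (h : Function.Surjective (algebraMap R S)) :
    Module.supportDim R M = Module.supportDim S M := by
  have : Module.Finite R S := .of_surjective (Algebra.linearMap R S) h
  have : Module.Finite R M := .trans S M
  have hbij : Function.Bijective
      (Ideal.quotientMap (Module.annihilator S M) (algebraMap R S) le_rfl) :=
    ⟨Ideal.quotientMap_injective, Ideal.quotientMap_surjective h⟩
  rw [Module.supportDim_eq_ringKrullDim_quotient_annihilator,
    Module.supportDim_eq_ringKrullDim_quotient_annihilator, ← Module.comap_annihilator (R := S),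
    ringKrullDim_eq_of_ringEquiv (.ofBijective _ hbij)]

end RestrictScalars

namespace SerreDefectLE

variable {R : Type*} [CommRing R] [IsLocalRing R] {n c c' : ℕ}
  {M : Type*} [AddCommGroup M] [Module R M]

lemma of_subsingleton [Subsingleton M] : SerreDefectLE R n c M := by
  rw [SerreDefectLE, Module.supportDim_eq_bot_of_subsingleton]
  simp

lemma congr {M' : Type*} [AddCommGroup M'] [Module R M'] (h : SerreDefectLE R n c M)
    (e : M ≃ₗ[R] M') : SerreDefectLE R n c M' := by
  simpa only [SerreDefectLE, localDepth, idealDepth, Module.supportDim_eq_of_equiv e,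
    e.isRegular_congr] using h

lemma restrictScalars {S : Type*} [CommRing S] [IsLocalRing S] [Algebra R S] [Module S M]
    [IsScalarTower R S M] [Module.Finite S M] (hS : Function.Surjective (algebraMap R S))
    (h : SerreDefectLE S n c M) : SerreDefectLE R n c M := by
  rw [SerreDefectLE, supportDim_eq_of_surjective_algebraMap S (M := M) hS]
  exact h.trans (add_le_add_left
    (WithBot.coe_le_coe.mpr (localDepth_le_of_surjective_algebraMap S hS)) _)

lemma tensorProduct {S : Type*} [CommRing S] [IsLocalRing S] [Algebra R S]
    [IsNoetherianRing R] [IsNoetherianRing S] [IsLocalHom (algebraMap R S)] [Module.Finite R M]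
    {N : Type*} [AddCommGroup N] [Module R N] [Module S N] [IsScalarTower R S N]
    [Module.Finite S N] [Module.Flat R N] (hM : SerreDefectLE R n c M)
    (hN : SerreDefectLE S n c' (N ⊗[R] (R ⧸ maximalIdeal R))) :
    SerreDefectLE S n (c + c') (N ⊗[R] M) := by
  rcases subsingleton_or_nontrivial (N ⊗[R] M) with _ | _
  · exact of_subsingleton
  exact min_le_add_add_of_le_add (supportDim_tensorProduct_le N M)
    (localDepth_add_le_localDepth_tensorProduct N M) hM hN

end SerreDefectLE

section Localization

variable {R : Type*} [CommRing R] {n : ℕ} {M : Type*} [AddCommGroup M] [Module R M]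

lemma forall_mem_support_serreDefectLE_iff {c : ℕ} :
    (∀ P ∈ Module.support R M, SerreDefectLE (Localization.AtPrime P.asIdeal) n c
      (LocalizedModule P.asIdeal.primeCompl M)) ↔
    ∀ P : PrimeSpectrum R, SerreDefectLE (Localization.AtPrime P.asIdeal) n c
      (LocalizedModule P.asIdeal.primeCompl M) := by
  refine ⟨fun h P ↦ ?_, fun h P _ ↦ h P⟩
  by_cases hP : P ∈ Module.support R M
  · exact h P hP
  · have := Module.notMem_support_iff.mp hP
    exact .of_subsingleton

lemma serreCondS_iff :
    SerreCondS R n M ↔ ∀ P : PrimeSpectrum R, SerreDefectLE (Localization.AtPrime P.asIdeal) n 0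
      (LocalizedModule P.asIdeal.primeCompl M) := by
  rw [← forall_mem_support_serreDefectLE_iff]
  simp only [SerreDefectLE, Nat.cast_zero, add_zero]
  rfl

lemma condC_iff :
    CondC R n M ↔ ∀ P : PrimeSpectrum R, SerreDefectLE (Localization.AtPrime P.asIdeal) n 1
      (LocalizedModule P.asIdeal.primeCompl M) := by
  rw [← forall_mem_support_serreDefectLE_iff]
  simp only [SerreDefectLE, Nat.cast_one]
  rfl

end Localization

section Fiber

lemma exists_isLocalizedModule_quotient {S S' N N' : Type*} [CommRing S] [CommRing S']
    [Algebra S S'] [AddCommGroup N] [Module S N] [AddCommGroup N'] [Module S N'] [Module S' N']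
    [IsScalarTower S S' N'] (T : Submonoid S) [IsLocalization T S'] (g : N →ₗ[S] N')
    [IsLocalizedModule T g] (I : Ideal S) :
    ∃ h : (N ⧸ (I • (⊤ : Submodule S N))) →ₗ[S]
      (N' ⧸ (I.map (algebraMap S S') • (⊤ : Submodule S' N'))), IsLocalizedModule T h := by
  have heq : (I • (⊤ : Submodule S N)).localized' S' T g =
      I.map (algebraMap S S') • (⊤ : Submodule S' N') := by
    rw [Submodule.localized'_smul, Submodule.localized'_top, Submodule.localized'_eq_span]
    rfl
  exact ⟨((Submodule.quotEquivOfEq _ _ heq).restrictScalars S).toLinearMap ∘ₗ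
    Submodule.toLocalizedQuotient' S' T g _, inferInstance⟩

lemma isLocalizedModule_comp_of_le {S D E E' : Type*} [CommRing S] [AddCommGroup D] [Module S D]
    [AddCommGroup E] [Module S E] [AddCommGroup E'] [Module S E'] {T U : Submonoid S} (hTU : T ≤ U)
    (i : D →ₗ[S] E) [IsLocalizedModule T i] (j : E →ₗ[S] E') [IsLocalizedModule U j] :
    IsLocalizedModule U (j ∘ₗ i) where
  map_units u := IsLocalizedModule.map_units j u
  surj y := by
    obtain ⟨⟨x, u⟩, hx⟩ := IsLocalizedModule.surj U j y
    obtain ⟨⟨d, t⟩, hd⟩ := IsLocalizedModule.surj T i x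
    refine ⟨(d, ⟨t, hTU t.2⟩ * u), ?_⟩
    simp only [Submonoid.smul_def] at hx hd
    simp [Submonoid.smul_def, mul_smul, hx, ← map_smul, hd]
  exists_of_eq {d d'} h := by
    obtain ⟨u, hu⟩ := IsLocalizedModule.exists_of_eq (S := U) (f := j) h
    obtain ⟨t, ht⟩ := IsLocalizedModule.exists_of_eq (S := T) (f := i) (x₁ := u • d) (x₂ := u • d')
      (by simpa [Submonoid.smul_def] using hu)
    exact ⟨⟨t, hTU t.2⟩ * u, by simpa [Submonoid.smul_def, mul_smul] using ht⟩

lemma isLocalizedModule_restrictScalars_of_exists_div {S F E E' : Type*} [CommRing S] [CommRing F]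
    [Algebra S F] [AddCommGroup E] [Module S E] [Module F E] [IsScalarTower S F E]
    [AddCommGroup E'] [Module S E'] [Module F E'] [IsScalarTower S F E']
    (hF : ∀ x : F, ∃ r s : S, IsUnit (algebraMap S F s) ∧ algebraMap S F s * x = algebraMap S F r)
    (Q : Ideal F) [Q.IsPrime] (j : E →ₗ[F] E') [IsLocalizedModule Q.primeCompl j] :
    IsLocalizedModule (Q.comap (algebraMap S F)).primeCompl (j.restrictScalars S) := by
  have hQ : ∀ x : Q.primeCompl, ∃ r : (Q.comap (algebraMap S F)).primeCompl, ∃ s : S,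
      algebraMap S F r = algebraMap S F s * x := fun x ↦ by
    obtain ⟨r, s, hs, hx⟩ := hF x
    refine ⟨⟨r, fun hr ↦ ?_⟩, s, hx.symm⟩
    rw [SetLike.mem_coe, Ideal.mem_comap, ← hx, Ideal.unit_mul_mem_iff_mem _ hs] at hr
    exact x.2 hr
  refine ⟨fun r ↦ ?_, fun y ↦ ?_, fun {x x'} h ↦ ?_⟩
  · have := IsLocalizedModule.map_units j (⟨algebraMap S F r, r.2⟩ : Q.primeCompl)
    rw [Module.End.isUnit_iff] at this ⊢
    simpa [Function.Bijective, Function.Injective, Function.Surjective] using this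
  · obtain ⟨⟨x, f⟩, hx⟩ := IsLocalizedModule.surj Q.primeCompl j y
    obtain ⟨r, s, hrs⟩ := hQ f
    refine ⟨(s • x, r), ?_⟩
    simp only [Submonoid.smul_def] at hx ⊢
    rw [← algebraMap_smul F, hrs, mul_smul, hx]
    simp
  · obtain ⟨f, hf⟩ := IsLocalizedModule.exists_of_eq (S := Q.primeCompl) (f := j) h
    obtain ⟨r, s, hrs⟩ := hQ f
    refine ⟨r, ?_⟩
    simp only [Submonoid.smul_def] at hf ⊢
    rw [← algebraMap_smul F, hrs, mul_smul, hf, ← mul_smul, ← hrs, algebraMap_smul]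

lemma SerreDefectLE.of_localizedModule_of_exists_div {S F D E X : Type*} [CommRing S] [CommRing F]
    [Algebra S F] [AddCommGroup D] [Module S D] [AddCommGroup E] [Module S E] [Module F E]
    [IsScalarTower S F E] [Module.Finite F E] {n c : ℕ}
    (hF : ∀ x : F, ∃ r s : S, IsUnit (algebraMap S F s) ∧ algebraMap S F s * x = algebraMap S F r)
    {T : Submonoid S} (i : D →ₗ[S] E) [IsLocalizedModule T i]
    {Q : Ideal S} [Q.IsPrime] (hT : T ≤ Q.primeCompl)
    {Q' : Ideal F} [Q'.IsPrime] (hQ : Q'.comap (algebraMap S F) = Q)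
    [AddCommGroup X] [Module S X] [Module (Localization.AtPrime Q) X]
    [IsScalarTower S (Localization.AtPrime Q) X]
    (k : D →ₗ[S] X) [IsLocalizedModule Q.primeCompl k]
    (h : SerreDefectLE (Localization.AtPrime Q') n c (LocalizedModule Q'.primeCompl E)) :
    SerreDefectLE (Localization.AtPrime Q) n c X := by
  subst hQ
  set Q := Q'.comap (algebraMap S F)
  let : Algebra (Localization.AtPrime Q) (Localization.AtPrime Q') :=
    (Localization.localRingHom Q Q' (algebraMap S F) rfl).toAlgebra
  let : Module (Localization.AtPrime Q) (LocalizedModule Q'.primeCompl E) :=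
    Module.compHom _ (algebraMap (Localization.AtPrime Q) (Localization.AtPrime Q'))
  have : IsScalarTower (Localization.AtPrime Q) (Localization.AtPrime Q')
      (LocalizedModule Q'.primeCompl E) := .of_algebraMap_smul fun _ _ ↦ rfl
  have : IsScalarTower S (Localization.AtPrime Q) (Localization.AtPrime Q') :=
    .of_algebraMap_eq fun s ↦ by
      rw [RingHom.algebraMap_toAlgebra, Localization.localRingHom_to_map,
        ← IsScalarTower.algebraMap_apply]
  have : IsScalarTower S (Localization.AtPrime Q) (LocalizedModule Q'.primeCompl E) :=
    .to₁₂₄ S _ (Localization.AtPrime Q') _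
  let j := LocalizedModule.mkLinearMap Q'.primeCompl E
  have := isLocalizedModule_restrictScalars_of_exists_div hF Q' j
  have := isLocalizedModule_comp_of_le hT i (j.restrictScalars S)
  let e : LocalizedModule Q'.primeCompl E ≃ₗ[Localization.AtPrime Q] X :=
    (IsLocalizedModule.linearEquiv Q.primeCompl (j.restrictScalars S ∘ₗ i)
      k).extendScalarsOfIsLocalization Q.primeCompl _
  have hsurj := (RingHom.surjectiveOnStalks_of_exists_div hF) Q' inferInstance
  exact (h.restrictScalars hsurj).congr e

lemma exists_isUnit_algebraMap_quotient_localization_mul_eq {S L : Type*} [CommRing S] [CommRing L]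
    [Algebra S L] (T : Submonoid S) [IsLocalization T L] (J : Ideal L) (x : L ⧸ J) :
    ∃ r s : S, IsUnit (algebraMap S (L ⧸ J) s) ∧
      algebraMap S (L ⧸ J) s * x = algebraMap S (L ⧸ J) r := by
  obtain ⟨x, rfl⟩ := Ideal.Quotient.mk_surjective x
  obtain ⟨⟨r, t⟩, hrt⟩ := IsLocalization.surj T x
  refine ⟨r, t, (IsLocalization.map_units L t).map (Ideal.Quotient.mk J), ?_⟩
  rw [mul_comm]
  exact congrArg (Ideal.Quotient.mk J) hrt

lemma exists_isPrime_comap_algebraMap_quotient_map_eq {S L : Type*} [CommRing S] [CommRing L]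
    [Algebra S L] {T : Submonoid S} [IsLocalization T L] {I Q : Ideal S} [Q.IsPrime] (hIQ : I ≤ Q)
    (hT : T ≤ Q.primeCompl) :
    ∃ Q' : Ideal (L ⧸ I.map (algebraMap S L)), Q'.IsPrime ∧ Q'.comap (algebraMap S _) = Q := by
  have hdisj : Disjoint (T : Set S) (Q : Set S) := Set.disjoint_left.mpr hT
  have hQL := IsLocalization.isPrime_of_isPrime_disjoint T L Q inferInstance hdisj
  have hker : RingHom.ker (Ideal.Quotient.mk (I.map (algebraMap S L))) ≤ Q.map (algebraMap S L) :=
    Ideal.mk_ker.trans_le (Ideal.map_mono hIQ)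
  refine ⟨_, Ideal.map_isPrime_of_surjective Ideal.Quotient.mk_surjective hker, ?_⟩
  rw [IsScalarTower.algebraMap_eq S L (L ⧸ I.map (algebraMap S L)), ← Ideal.comap_comap,
    Ideal.Quotient.algebraMap_eq, Ideal.comap_map_of_surjective' _ Ideal.Quotient.mk_surjective,
    sup_eq_left.mpr hker]
  exact IsLocalization.under_map_of_isPrime_disjoint T L inferInstance hdisj

lemma SerreDefectLE.quotient_of_condC {S N : Type*} [CommRing S] [AddCommGroup N] [Module S N]
    [Module.Finite S N] {n : ℕ} {T : Submonoid S} {I : Ideal S}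
    {L N' : Type*} [CommRing L] [Algebra S L] [IsLocalization T L] [AddCommGroup N'] [Module S N']
    [Module L N'] [IsScalarTower S L N'] (g : N →ₗ[S] N') [IsLocalizedModule T g]
    {J : Ideal L} (hJ : J = I.map (algebraMap S L))
    (h : CondC (L ⧸ J) n (N' ⧸ (J • (⊤ : Submodule L N'))))
    (Q : Ideal S) [Q.IsPrime] (hIQ : I ≤ Q) (hT : T ≤ Q.primeCompl) :
    SerreDefectLE (Localization.AtPrime Q) n 1
      (LocalizedModule Q.primeCompl N ⧸ (I.map (algebraMap S (Localization.AtPrime Q)) •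
        (⊤ : Submodule (Localization.AtPrime Q) (LocalizedModule Q.primeCompl N)))) := by
  have : Module.Finite L N' := .of_isLocalizedModule T g
  have : IsScalarTower S (L ⧸ J) (N' ⧸ (J • (⊤ : Submodule L N'))) :=
    .of_algebraMap_smul fun s x ↦ by
      obtain ⟨x, rfl⟩ := Submodule.Quotient.mk_surjective _ x
      exact congrArg Submodule.Quotient.mk (algebraMap_smul L s x)
  have : Module.Finite (L ⧸ J) (N' ⧸ (J • (⊤ : Submodule L N'))) :=
    .of_restrictScalars_finite L _ _
  subst hJ
  obtain ⟨Q', hQ', hcomap⟩ := exists_isPrime_comap_algebraMap_quotient_map_eq (L := L) hIQ hT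
  obtain ⟨i, hi⟩ := exists_isLocalizedModule_quotient (S' := L) T g I
  obtain ⟨k, hk⟩ := exists_isLocalizedModule_quotient (S' := Localization.AtPrime Q) Q.primeCompl
    (LocalizedModule.mkLinearMap Q.primeCompl N) I
  exact .of_localizedModule_of_exists_div
    (exists_isUnit_algebraMap_quotient_localization_mul_eq T _) i hT hcomap k
    (condC_iff.mp h ⟨Q', hQ'⟩)

end Fiber

section TensorLocalization

lemma flat_of_isLocalizedModule_of_isScalarTower {R S N N' : Type*} [CommRing R] [CommRing S]
    [Algebra R S] [AddCommGroup N] [Module R N] [Module S N] [IsScalarTower R S N]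
    [AddCommGroup N'] [Module R N'] [Module S N'] [IsScalarTower R S N'] (T : Submonoid S)
    (g : N →ₗ[S] N') [IsLocalizedModule T g] [Module.Flat R N] : Module.Flat R N' := by
  rw [Module.Flat.iff_lTensor_injective']
  intro I
  rw [← AlgebraTensorModule.coe_lTensor (A := S), ← IsLocalizedModule.map_lTensor (S := T) (g := g)]
  exact IsLocalizedModule.map_injective T _ _ _
    (Module.Flat.lTensor_preserves_injective_linearMap _ I.injective_subtype)

/-- The commutativity isomorphism of the tensor product is linear over an algebra acting on the
right factor through `tensorRightModule`. -/
def tensorRightModuleComm (R S : Type u) [CommRing R] [CommRing S] [Algebra R S]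
    (M : Type u) [AddCommGroup M] [Module R M]
    (N : Type u) [AddCommGroup N] [Module R N] [Module S N] [IsScalarTower R S N] :
    M ⊗[R] N ≃ₗ[S] N ⊗[R] M :=
  { TensorProduct.comm R M N with
    map_smul' := fun s x ↦ (TensorProduct.comm R M N).apply_symm_apply
      (s • TensorProduct.comm R M N x) }

/-- Localizing `M ⊗[R] N` upstairs amounts to tensoring the localization `N'` of `N` upstairs with
the localization `M'` of `M` downstairs. -/
def localizedTensorEquiv {R S M N : Type u} [CommRing R] [CommRing S] [Algebra R S]
    [AddCommGroup M] [Module R M] [AddCommGroup N] [Module R N] [Module S N] [IsScalarTower R S N]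
    {R' S' M' N' X : Type*} [CommRing R'] [CommRing S'] [Algebra R R'] [Algebra S S']
    [Algebra R' S'] [Algebra R S']
    [AddCommGroup M'] [Module R M'] [Module R' M'] [IsScalarTower R R' M']
    [AddCommGroup N'] [Module R N'] [Module S N'] [Module R' N'] [Module S' N']
    [IsScalarTower R S N'] [IsScalarTower R R' N'] [IsScalarTower S S' N'] [IsScalarTower R' S' N']
    [IsScalarTower R S' N'] [AddCommGroup X] [Module S X] [Module S' X] [IsScalarTower S S' X]
    (U : Submonoid R) (T : Submonoid S) [IsLocalization U R'] [IsLocalization T S']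
    (f : M →ₗ[R] M') [IsLocalizedModule U f] (g : N →ₗ[S] N') [IsLocalizedModule T g]
    (h : M ⊗[R] N →ₗ[S] X) [IsLocalizedModule T h] :
    X ≃ₗ[S'] N' ⊗[R'] M' :=
  ((IsLocalizedModule.linearEquiv T h (AlgebraTensorModule.rTensor R M g ∘ₗ
      (tensorRightModuleComm R S M N).toLinearMap)).extendScalarsOfIsLocalization T S').trans <|
    (AlgebraTensorModule.cancelBaseChange R R' S' N' M).symm.trans <|
      AlgebraTensorModule.congr (.refl S' N') (IsLocalizedModule.isBaseChange U R' f).equiv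

end TensorLocalization

section PrimeLiesOver

lemma comap_mem_support_of_mem_support_tensorProduct {R S N M : Type*} [CommRing R] [CommRing S]
    [Algebra R S] [AddCommGroup N] [Module R N] [Module S N] [IsScalarTower R S N]
    [AddCommGroup M] [Module R M] [Module.Finite R M] {Q : PrimeSpectrum S}
    (hQ : Q ∈ Module.support S (N ⊗[R] M)) : Q.comap (algebraMap R S) ∈ Module.support R M := by
  rw [Module.mem_support_iff_of_finite, PrimeSpectrum.comap_asIdeal]
  calc Module.annihilator R M
    _ ≤ Module.annihilator R (N ⊗[R] M) := annihilator_right_le_annihilator_tensorProduct N M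
    _ = (Module.annihilator S (N ⊗[R] M)).comap (algebraMap R S) := Module.comap_annihilator.symm
    _ ≤ Q.asIdeal.comap (algebraMap R S) :=
      Ideal.comap_mono (Module.annihilator_le_of_mem_support hQ)

lemma SerreDefectLE.localizedModule_tensorProduct {R S M N : Type u} [CommRing R] [CommRing S]
    [IsNoetherianRing R] [IsNoetherianRing S] [Algebra R S] [AddCommGroup M] [Module R M]
    [Module.Finite R M] [AddCommGroup N] [Module R N] [Module S N] [IsScalarTower R S N]
    [Module.Finite S N] [Module.Flat R N] {n c c' : ℕ} (P : Ideal R) [P.IsPrime] (Q : Ideal S)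
    [Q.IsPrime] [Q.LiesOver P]
    (hM : SerreDefectLE (Localization.AtPrime P) n c (LocalizedModule P.primeCompl M))
    (hN : SerreDefectLE (Localization.AtPrime Q) n c' (LocalizedModule Q.primeCompl N ⧸
      ((P.map (algebraMap R S)).map (algebraMap S (Localization.AtPrime Q)) •
        (⊤ : Submodule (Localization.AtPrime Q) (LocalizedModule Q.primeCompl N))))) :
    SerreDefectLE (Localization.AtPrime Q) n (c + c')
      (LocalizedModule Q.primeCompl (M ⊗[R] N)) := by
  let R' := Localization.AtPrime P
  let S' := Localization.AtPrime Q
  let N' := LocalizedModule Q.primeCompl N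
  let g : N →ₗ[S] N' := LocalizedModule.mkLinearMap Q.primeCompl N
  let : Algebra R' S' := Localization.AtPrime.algebraOfLiesOver P Q
  have : IsLocalHom (algebraMap R' S') :=
    Localization.isLocalHom_localRingHom P Q (algebraMap R S) Ideal.LiesOver.over
  let : Module R' N' := Module.compHom N' (algebraMap R' S')
  have : IsScalarTower R' S' N' := .of_algebraMap_smul fun _ _ ↦ rfl
  have : IsScalarTower R R' N' := .to₁₂₄ R R' S' N'
  have : IsNoetherianRing R' := IsLocalization.isNoetherianRing P.primeCompl _ inferInstance
  have : IsNoetherianRing S' := IsLocalization.isNoetherianRing Q.primeCompl _ inferInstance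
  have : Module.Flat R N' := flat_of_isLocalizedModule_of_isScalarTower Q.primeCompl g
  have : Module.Flat R' N' :=
    (Module.flat_iff_of_isLocalization R' P.primeCompl N').mpr inferInstance
  have hmap : (P.map (algebraMap R S)).map (algebraMap S S') =
      (maximalIdeal R').map (algebraMap R' S') := by
    rw [← Localization.AtPrime.map_eq_maximalIdeal, Ideal.map_map, Ideal.map_map,
      ← IsScalarTower.algebraMap_eq, ← IsScalarTower.algebraMap_eq]
  rw [hmap] at hN
  exact (hM.tensorProduct (hN.congr (quotientMapSMulTopEquivTensor N' (maximalIdeal R')))).congr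
    (localizedTensorEquiv P.primeCompl Q.primeCompl (LocalizedModule.mkLinearMap P.primeCompl M) g
      (LocalizedModule.mkLinearMap Q.primeCompl (M ⊗[R] N))).symm

end PrimeLiesOver

theorem tensor_condC_of_serreS_base_condC_fibers (A B : Type u) [CommRing A] [CommRing B] [IsNoetherianRing A] [IsNoetherianRing B]
    [Algebra A B] (n : ℕ)
    (M : Type u) [AddCommGroup M] [Module A M] [Module.Finite A M]
    (N : Type u) [AddCommGroup N] [Module A N] [Module B N] [IsScalarTower A B N]
    [Module.Finite B N] [Module.Flat A N]
    (hM : SerreCondS A n M)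
    (hfib : ∀ P ∈ Module.support A M, CondC (fiberRing A B P) n (fiberModule A B P N)) :
    CondC B n (M ⊗[A] N) := by
  refine condC_iff.mpr (forall_mem_support_serreDefectLE_iff.mp fun Q hQ ↦ ?_)
  let P := Q.comap (algebraMap A B)
  have hP : P ∈ Module.support A M := by
    rw [(tensorRightModuleComm A B M N).support_eq] at hQ
    exact comap_mem_support_of_mem_support_tensorProduct hQ
  have hQP : Q.asIdeal.LiesOver P.asIdeal := ⟨rfl⟩
  have hT : fiberSubmonoid A B P ≤ Q.asIdeal.primeCompl :=
    Submonoid.map_le_iff_le_comap.mpr fun _ h ↦ h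
  have hfiber := SerreDefectLE.quotient_of_condC
    (LocalizedModule.mkLinearMap (fiberSubmonoid A B P) N) (Ideal.map_map _ _).symm (hfib P hP)
    Q.asIdeal Ideal.map_comap_le hT
  simpa only [zero_add] using
    SerreDefectLE.localizedModule_tensorProduct P.asIdeal Q.asIdeal (serreCondS_iff.mp hM P) hfiber

end
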